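/- arXiv:1711.02916 — 4 statements merged into one kernel-verified Lean document; each statement's English description precedes it below -/
import Mathlib

section
/- For every positive integer t there exist a Dirac bipartite graph G on 2n vertices, where n = 4t(t+1), and an edge colouring χ of G that is (t+1)²-bounded (note (t+1)² = ((t+1)/(4t))·n), such that G contains no perfect matching that is rainbow with respect to χ. -/
namespace RPM

/-- adjacency between positions: `m` block size, `k` number of small blocks. -/
def R (m k : ℕ) (a b : ℕ) : Prop :=
  (a / m < k ∨ b / m < k) ∧ (a / m < k → b / m < k → a / m = b / m)

lemma R_symm {m k a b : ℕ} (h : R m k a b) : R m k b a :=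
  ⟨h.1.symm, fun h1 h2 => (h.2 h2 h1).symm⟩

def gr (n m k : ℕ) : SimpleGraph (Fin n ⊕ Fin n) where
  Adj u v := match u, v with
    | Sum.inl a, Sum.inr b => R m k a b
    | Sum.inr a, Sum.inl b => R m k a b
    | _, _ => False
  symm := ⟨by
    rintro (a | a) (b | b) h
    · exact h
    · exact R_symm h
    · exact R_symm h
    · exact h⟩
  loopless := ⟨by rintro (a | a) h <;> exact h⟩

def blk {n : ℕ} (m : ℕ) : Fin n ⊕ Fin n → ℕ
  | Sum.inl a => a / m
  | Sum.inr a => a / m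

open Classical in
noncomputable def col (n m k : ℕ) (e : Sym2 (Fin n ⊕ Fin n)) : ℕ :=
  if h : ∃ p, p < k ∧ ∀ v ∈ e, blk m v = p then h.choose
  else k + (Fintype.equivFin (Sym2 (Fin n ⊕ Fin n)) e : ℕ)

lemma col_small {n m k : ℕ} (e : Sym2 (Fin n ⊕ Fin n))
    (h : ∃ p, p < k ∧ ∀ v ∈ e, blk m v = p) :
    col n m k e < k ∧ ∀ v ∈ e, blk m v = col n m k e := by
  have := h.choose_spec
  rw [col, dif_pos h]
  exact this

lemma col_big {n m k : ℕ} (e : Sym2 (Fin n ⊕ Fin n))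
    (h : ¬ ∃ p, p < k ∧ ∀ v ∈ e, blk m v = p) :
    col n m k e = k + (Fintype.equivFin (Sym2 (Fin n ⊕ Fin n)) e : ℕ) := by
  rw [col, dif_neg h]

lemma card_Ico {n lo hi : ℕ} (h : hi ≤ n) :
    (Finset.univ.filter (fun i : Fin n => lo ≤ (i : ℕ) ∧ (i : ℕ) < hi)).card = hi - lo := by
  rw [← Nat.card_Ico, ← Finset.card_map Fin.valEmbedding]
  congr 1
  ext x
  simp only [Finset.mem_map, Finset.mem_filter, Finset.mem_univ, true_and,
    Fin.valEmbedding_apply, Finset.mem_Ico]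
  constructor
  · rintro ⟨a, h1, rfl⟩; exact h1
  · intro h1; exact ⟨⟨x, by omega⟩, h1, rfl⟩

lemma card_lt {n m k : ℕ} (hm : 0 < m) (h : k * m ≤ n) :
    (Finset.univ.filter (fun i : Fin n => (i : ℕ) / m < k)).card = k * m := by
  rw [← Nat.sub_zero (k * m), ← card_Ico (lo := 0) h]
  congr 1
  ext x
  simp [Nat.div_lt_iff_lt_mul hm]

lemma card_ge {n m k : ℕ} (hm : 0 < m) :
    (Finset.univ.filter (fun i : Fin n => k ≤ (i : ℕ) / m)).card = n - k * m := by
  rw [← card_Ico (lo := k * m) (le_refl n)]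
  congr 1
  ext x
  simp [Nat.le_div_iff_mul_le hm]

lemma card_blk {n m p : ℕ} (hm : 0 < m) (h : (p + 1) * m ≤ n) :
    (Finset.univ.filter (fun i : Fin n => (i : ℕ) / m = p)).card = m := by
  have h1 : (p + 1) * m - p * m = m := by rw [Nat.add_mul]; omega
  refine Eq.trans ?_ ((card_Ico (lo := p * m) h).trans h1)
  congr 1
  ext x
  simp only [Finset.mem_filter, Finset.mem_univ, true_and]
  rw [← Nat.le_div_iff_mul_le hm, ← Nat.div_lt_iff_lt_mul hm]
  omega

open Classical in
lemma deg {n m k : ℕ} (hm : 0 < m) (h : k * m ≤ n) (d : ℕ)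
    (h1 : d ≤ k * m) (h2 : d ≤ n - k * m + m) (a : ℕ) :
    d ≤ (Finset.univ.filter (fun i : Fin n => R m k a i)).card := by
  by_cases ha : a / m < k
  · have hb : (a / m + 1) * m ≤ n := le_trans (Nat.mul_le_mul_right m ha) h
    have := card_blk hm hb
    have h3 := card_ge (n := n) (k := k) hm
    refine h2.trans ?_
    nth_rewrite 2 [← this]
    rw [← h3, ← Finset.card_union_of_disjoint]
    · apply Finset.card_le_card
      intro x
      simp only [Finset.mem_union, Finset.mem_filter, Finset.mem_univ, true_and]
      rintro (hx | hx)
      · exact ⟨Or.inl ha, fun _ hx2 => absurd hx (by omega)⟩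
      · exact ⟨Or.inl ha, fun _ _ => hx.symm⟩
    · rw [Finset.disjoint_left]
      intro x
      simp only [Finset.mem_filter, Finset.mem_univ, true_and]
      omega
  · refine h1.trans ?_
    rw [← card_lt hm h]
    apply Finset.card_le_card
    intro x
    simp only [Finset.mem_filter, Finset.mem_univ, true_and]
    intro hx
    exact ⟨Or.inr hx, fun hx2 => absurd hx2 ha⟩

lemma deg_gr {n m k : ℕ} (hm : 0 < m) (h : k * m ≤ n) (d : ℕ)
    (h1 : d ≤ k * m) (h2 : d ≤ n - k * m + m) (v : Fin n ⊕ Fin n) :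
    d ≤ ((gr n m k).neighborSet v).ncard := by
  classical
  rcases v with a | a
  · have : (gr n m k).neighborSet (Sum.inl a) =
        Sum.inr '' ((Finset.univ.filter (fun i : Fin n => R m k a i) : Finset (Fin n)) :
          Set (Fin n)) := by
      ext (x | x) <;> simp [gr]
    rw [this, Set.ncard_image_of_injective _ Sum.inr_injective, Set.ncard_coe_finset]
    exact deg hm h d h1 h2 a
  · have : (gr n m k).neighborSet (Sum.inr a) =
        Sum.inl '' ((Finset.univ.filter (fun i : Fin n => R m k a i) : Finset (Fin n)) :
          Set (Fin n)) := by
      ext (x | x) <;> simp [gr]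
    rw [this, Set.ncard_image_of_injective _ Sum.inl_injective, Set.ncard_coe_finset]
    exact deg hm h d h1 h2 a

lemma bounded {n m k : ℕ} (hm : 0 < m) (h : k * m ≤ n) (c : ℕ) :
    ({e : Sym2 (Fin n ⊕ Fin n) | e ∈ (gr n m k).edgeSet ∧ col n m k e = c}).ncard ≤ m ^ 2 := by
  classical
  by_cases hc : c < k
  · have hb : (c + 1) * m ≤ n := le_trans (Nat.mul_le_mul_right m hc) h
    have hcard := card_blk hm hb
    set S := Finset.univ.filter (fun i : Fin n => (i : ℕ) / m = c) with hS
    have hsub : {e : Sym2 (Fin n ⊕ Fin n) | e ∈ (gr n m k).edgeSet ∧ col n m k e = c} ⊆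
        (((S ×ˢ S).image (fun x => s(Sum.inl x.1, Sum.inr x.2)) :
          Finset (Sym2 (Fin n ⊕ Fin n))) : Set (Sym2 (Fin n ⊕ Fin n))) := by
      rintro e ⟨he, hce⟩
      have hsm : ∃ p, p < k ∧ ∀ v ∈ e, blk m v = p := by
        by_contra hne
        have := col_big e hne
        omega
      have h2 := (col_small e hsm).2
      rw [hce] at h2
      induction e using Sym2.ind with
      | _ x y =>
        have hx := h2 x (by simp)
        have hy := h2 y (by simp)
        rw [SimpleGraph.mem_edgeSet] at he
        rw [Finset.mem_coe, Finset.mem_image]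
        rcases x with a | a <;> rcases y with b | b
        · exact he.elim
        · exact ⟨(a, b), by simpa [hS] using ⟨hx, hy⟩, rfl⟩
        · exact ⟨(b, a), by simpa [hS] using ⟨hy, hx⟩, Sym2.eq_swap⟩
        · exact he.elim
    refine (Set.ncard_le_ncard hsub (Finset.finite_toSet _)).trans ?_
    rw [Set.ncard_coe_finset]
    refine Finset.card_image_le.trans ?_
    rw [Finset.card_product, hcard, sq]
  · have : ({e : Sym2 (Fin n ⊕ Fin n) | e ∈ (gr n m k).edgeSet ∧ col n m k e = c}).ncard ≤ 1 := by
      rw [Set.ncard_le_one (Set.toFinite _)]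
      have key : ∀ e : Sym2 (Fin n ⊕ Fin n), col n m k e = c →
          c = k + (Fintype.equivFin (Sym2 (Fin n ⊕ Fin n)) e : ℕ) := by
        intro e he
        rw [← he]
        apply col_big
        intro hs
        have := (col_small e hs).1
        omega
      rintro e ⟨_, he⟩ f ⟨_, hf⟩
      apply (Fintype.equivFin (Sym2 (Fin n ⊕ Fin n))).injective
      apply Fin.ext
      have := key e he
      have := key f hf
      omega
    exact this.trans (Nat.one_le_pow _ _ hm)

lemma noPM {n m k : ℕ} (hm : 0 < m) (h : k * m ≤ n) (hk : n - k * m + k < k * m)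
    (M : (gr n m k).Subgraph) (hM : M.IsPerfectMatching)
    (hr : ∀ e ∈ M.edgeSet, ∀ f ∈ M.edgeSet, col n m k e = col n m k f → e = f) : False := by
  classical
  have hex : ∀ a : Fin n, ∃ b : Fin n, M.Adj (Sum.inl a) (Sum.inr b) := by
    intro a
    obtain ⟨w, hw, -⟩ := hM.1 (hM.2 (Sum.inl a))
    rcases w with b | b
    · exact (M.adj_sub hw).elim
    · exact ⟨b, hw⟩
  choose g hg using hex
  have ginj : Function.Injective g := by
    intro a a' haa
    have h1 := (hg a).symm
    have h2 := (hg a').symm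
    rw [← haa] at h2
    exact Sum.inl_injective (hM.1.eq_of_adj_left h1 h2)
  set A := Finset.univ.filter (fun i : Fin n => (i : ℕ) / m < k) with hA
  have hAc : A.card = k * m := card_lt hm h
  have hS : (A.filter (fun a => k ≤ (g a : ℕ) / m)).card ≤ n - k * m := by
    rw [← card_ge (n := n) (k := k) hm]
    apply Finset.card_le_card_of_injOn g
    · intro a ha
      simp at ha ⊢
      exact ha.2
    · exact ginj.injOn
  have hT := Finset.card_filter_add_card_filter_not (s := A) (fun a => k ≤ (g a : ℕ) / m)
  set T := A.filter (fun a => ¬ k ≤ (g a : ℕ) / m) with hTdef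
  have hTk : k < T.card := by omega
  have hsm : ∀ a ∈ T, col n m k s(Sum.inl a, Sum.inr (g a)) < k := by
    intro a ha
    simp only [hTdef, hA, Finset.mem_filter, Finset.mem_univ, true_and] at ha
    have hadj : R m k a (g a) := M.adj_sub (hg a)
    have heq := hadj.2 ha.1 (by omega)
    refine (col_small _ ⟨(a : ℕ) / m, ha.1, ?_⟩).1
    intro v hv
    rw [Sym2.mem_iff] at hv
    rcases hv with rfl | rfl
    · rfl
    · exact heq.symm
  obtain ⟨x, hx, y, hy, hxy, hc⟩ := Finset.exists_ne_map_eq_of_card_lt_of_maps_to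
    (s := T) (t := Finset.range k) (by simpa using hTk)
    (f := fun a => col n m k s(Sum.inl a, Sum.inr (g a)))
    (by intro a ha; simpa using hsm a ha)
  have := hr _ (SimpleGraph.Subgraph.mem_edgeSet.2 (hg x)) _
    (SimpleGraph.Subgraph.mem_edgeSet.2 (hg y)) hc
  simp at this
  exact hxy this.1

end RPM


/-- for every positive integer t there exist a Dirac bipartite graph G on
2n vertices with n = 4t(t+1) and a (t+1)²-bounded edge colouring χ of G such that G has
no perfect matching that is rainbow with respect to χ. -/
theorem no_rainbow_PM_example :
    ∀ t : ℕ, 1 ≤ t →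
      ∃ G : SimpleGraph (Fin (4 * t * (t + 1)) ⊕ Fin (4 * t * (t + 1))),
      ∃ χ : Sym2 (Fin (4 * t * (t + 1)) ⊕ Fin (4 * t * (t + 1))) → ℕ,
        -- G is bipartite with parts of size n = 4t(t+1)
        (∀ a b, ¬ G.Adj (Sum.inl a) (Sum.inl b)) ∧
        (∀ a b, ¬ G.Adj (Sum.inr a) (Sum.inr b)) ∧
        -- G is Dirac: minimum degree at least n/2
        (∀ v, ((4 * t * (t + 1) : ℕ) : ℝ) / 2 ≤ ((G.neighborSet v).ncard : ℝ)) ∧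
        -- χ is (t+1)²-bounded
        (∀ c : ℕ, ({e : Sym2 (Fin (4 * t * (t + 1)) ⊕ Fin (4 * t * (t + 1))) |
            e ∈ G.edgeSet ∧ χ e = c}).ncard ≤ (t + 1) ^ 2) ∧
        -- G has no rainbow perfect matching
        (∀ M : G.Subgraph, M.IsPerfectMatching →
          ¬ (∀ e ∈ M.edgeSet, ∀ f ∈ M.edgeSet, χ e = χ f → e = f)) := by
  intro t ht
  have hm : 0 < t + 1 := Nat.succ_pos t
  have e1 : 4 * t * (t + 1) = 4 * (t * t) + 4 * t := by ring
  have e2 : (2 * t + 1) * (t + 1) = 2 * (t * t) + 3 * t + 1 := by ring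
  have htt : t ≤ t * t := Nat.le_mul_self t
  have h : (2 * t + 1) * (t + 1) ≤ 4 * t * (t + 1) := by
    exact Nat.mul_le_mul_right _ (by omega)
  refine ⟨RPM.gr _ (t + 1) (2 * t + 1), RPM.col _ (t + 1) (2 * t + 1),
    fun a b h => h, fun a b h => h, ?_, ?_, ?_⟩
  · intro v
    have := RPM.deg_gr hm h (2 * t * (t + 1))
      (Nat.mul_le_mul_right _ (by omega))
      (by
        have e3 : 2 * t * (t + 1) = 2 * (t * t) + 2 * t := by ring
        omega) v
    have h3 : ((2 * t * (t + 1) : ℕ) : ℝ) ≤ _ := Nat.cast_le.2 this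
    refine le_trans (le_of_eq ?_) h3
    push_cast
    ring
  · exact RPM.bounded hm h
  · intro M hM hr
    exact RPM.noPM hm h (by omega) M hM hr
end

section
/- For every ε ∈ (0,1) there exists n₀ ∈ ℕ such that for every n ≥ n₀ the following holds: if G = (A ∪ B, E) is a balanced bipartite graph on 2n vertices with minimum degree at least (1/2 + ε)n, then G is a bipartite robust (ε/8, 1/4)-expander. -/
/-- The `ν`-robust neighbourhood of `X`: vertices with at least `ν n` neighbours in `X`. -/
def robustNbhd {V : Type*} (G : SimpleGraph V) (n : ℕ) (ν : ℝ) (X : Set V) : Set V :=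
  {v : V | ν * n ≤ ((G.neighborSet v ∩ X).ncard : ℝ)}

/-- Bipartite robust `(ν,τ)`-expander. -/
def BipRobustExpander {V : Type*} (G : SimpleGraph V) (A B : Set V) (n : ℕ)
    (ν τ : ℝ) : Prop :=
  ∀ X : Set V, (X ⊆ A ∨ X ⊆ B) → τ * n ≤ (X.ncard : ℝ) → (X.ncard : ℝ) ≤ (1 - τ) * n →
    (X.ncard : ℝ) + ν * n ≤ ((robustNbhd G n ν X).ncard : ℝ)

open Classical in
theorem robust_aux {V : Type} [Fintype V] (G : SimpleGraph V) (A B : Set V) (n : ℕ) (ε : ℝ)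
    (h0 : 0 < ε) (h1 : ε < 1) (hn : 1 ≤ n)
    (hdis : Disjoint A B) (hA : A.ncard = n) (hB : B.ncard = n)
    (hadj : ∀ u v : V, G.Adj u v → (u ∈ A ∧ v ∈ B) ∨ (u ∈ B ∧ v ∈ A))
    (hdeg : ∀ v : V, (1 / 2 + ε) * n ≤ ((G.neighborSet v).ncard : ℝ))
    (X : Set V) (hX : X ⊆ A) (hl : 1 / 4 * (n : ℝ) ≤ (X.ncard : ℝ))
    (hu : (X.ncard : ℝ) ≤ (1 - 1 / 4) * n) :
    (X.ncard : ℝ) + ε / 8 * n ≤ ((robustNbhd G n (ε / 8) X).ncard : ℝ) := by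
  have hn' : (1 : ℝ) ≤ n := by exact_mod_cast hn
  have hAB : ∀ a ∈ A, G.neighborSet a ⊆ B := by
    intro a ha v hv
    rcases hadj a v hv with h | h
    · exact h.2
    · exact (Set.disjoint_left.mp hdis ha h.1).elim
  have hBA : ∀ b ∈ B, G.neighborSet b ⊆ A := by
    intro b hb v hv
    rcases hadj b v hv with h | h
    · exact (Set.disjoint_left.mp hdis h.1 hb).elim
    · exact h.2
  by_cases hx : (n : ℝ) / 2 ≤ X.ncard
  · have hsub : B ⊆ robustNbhd G n (ε / 8) X := by
      intro b hb
      have e1 := Set.ncard_inter_add_ncard_union (G.neighborSet b) X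
      have e2 : (G.neighborSet b ∪ X).ncard ≤ A.ncard :=
        Set.ncard_le_ncard (Set.union_subset (hBA b hb) hX)
      have e3 : (G.neighborSet b).ncard + X.ncard ≤ (G.neighborSet b ∩ X).ncard + n := by omega
      have e4 : ((G.neighborSet b).ncard : ℝ) + X.ncard ≤ (G.neighborSet b ∩ X).ncard + n := by
        exact_mod_cast e3
      have := hdeg b
      change ε / 8 * n ≤ ((G.neighborSet b ∩ X).ncard : ℝ)
      nlinarith
    have h2 := Set.ncard_le_ncard hsub
    rw [hB] at h2
    have h3 : (n : ℝ) ≤ ((robustNbhd G n (ε / 8) X).ncard : ℝ) := by exact_mod_cast h2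
    nlinarith
  · push Not at hx
    set R := robustNbhd G n (ε / 8) X with hR
    have key := Finset.sum_card_bipartiteAbove_eq_sum_card_bipartiteBelow (s := X.toFinset)
      (t := B.toFinset) G.Adj
    have hXc : (X.toFinset.card : ℝ) = X.ncard := by rw [Set.ncard_eq_toFinset_card']
    have hBc : (B.toFinset.card : ℝ) = n := by rw [← Set.ncard_eq_toFinset_card', hB]
    have low : (X.ncard : ℝ) * ((1 / 2 + ε) * n) ≤
        ∑ a ∈ X.toFinset, ((B.toFinset.bipartiteAbove G.Adj a).card : ℝ) := by
      rw [← hXc, ← nsmul_eq_mul]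
      refine Finset.card_nsmul_le_sum _ _ _ ?_
      intro a ha
      refine (hdeg a).trans (le_of_eq ?_)
      rw [Set.ncard_eq_toFinset_card']
      congr 2
      ext v
      have : G.Adj a v → v ∈ B := fun h => hAB a (hX (by simpa using ha)) h
      simp [Finset.mem_bipartiteAbove]
      tauto
    have hbel : ∀ b, (X.toFinset.bipartiteBelow G.Adj b).card = (G.neighborSet b ∩ X).ncard := by
      intro b
      rw [Set.ncard_eq_toFinset_card']
      congr 1
      ext v
      simp [Finset.mem_bipartiteBelow, G.adj_comm, and_comm]
    have up : ∑ b ∈ B.toFinset, ((X.toFinset.bipartiteBelow G.Adj b).card : ℝ) ≤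
        ∑ b ∈ B.toFinset, ((if b ∈ R then (X.ncard : ℝ) else 0) + ε / 8 * n) := by
      refine Finset.sum_le_sum ?_
      intro b _
      rw [hbel]
      split_ifs with hb
      · have : ((G.neighborSet b ∩ X).ncard : ℝ) ≤ X.ncard := by
          exact_mod_cast Set.ncard_le_ncard Set.inter_subset_right
        have : 0 ≤ ε / 8 * n := by positivity
        linarith
      · have : ¬ (ε / 8 * n ≤ ((G.neighborSet b ∩ X).ncard : ℝ)) := hb
        linarith
    rw [Finset.sum_add_distrib, ← Finset.sum_filter, Finset.sum_const, Finset.sum_const,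
      nsmul_eq_mul, nsmul_eq_mul, hBc] at up
    have hr : ((B.toFinset.filter (· ∈ R)).card : ℝ) ≤ R.ncard := by
      rw [Set.ncard_eq_toFinset_card']
      exact_mod_cast Finset.card_le_card (fun v hv => by simp at hv ⊢; exact hv.2)
    have key' : ∑ a ∈ X.toFinset, ((B.toFinset.bipartiteAbove G.Adj a).card : ℝ) =
        ∑ b ∈ B.toFinset, ((X.toFinset.bipartiteBelow G.Adj b).card : ℝ) := by
      exact_mod_cast key
    have hxpos : (0 : ℝ) < X.ncard := by linarith
    have f1 : (X.ncard : ℝ) * ((1 / 2 + ε) * n) ≤ R.ncard * X.ncard + n * (ε / 8 * n) := by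
      have := mul_le_mul_of_nonneg_right hr hxpos.le
      linarith
    have f2 : n * (ε / 8 * n) ≤ (ε / 2 * n) * (X.ncard : ℝ) := by
      have := mul_le_mul_of_nonneg_left hl (show 0 ≤ ε / 2 * n by positivity)
      linarith
    have f3 : (X.ncard : ℝ) * ((1 / 2 + ε / 2) * n) ≤ X.ncard * R.ncard := by linarith
    have f4 := le_of_mul_le_mul_left f3 hxpos
    nlinarith

/-- every balanced bipartite graph on 2n vertices with minimum degree at
least (1/2 + ε)n is a bipartite robust (ε/8, 1/4)-expander (for n large enough). -/
theorem min_degree_implies_robust_expander :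
    ∀ ε : ℝ, ε ∈ Set.Ioo (0 : ℝ) 1 →
    ∃ n₀ : ℕ, ∀ n : ℕ, n₀ ≤ n →
      ∀ (V : Type) [Fintype V] (G : SimpleGraph V) (A B : Set V),
        A ∪ B = Set.univ → Disjoint A B → A.ncard = n → B.ncard = n →
        (∀ u v : V, G.Adj u v → (u ∈ A ∧ v ∈ B) ∨ (u ∈ B ∧ v ∈ A)) →
        (∀ v : V, (1 / 2 + ε) * n ≤ ((G.neighborSet v).ncard : ℝ)) →
        BipRobustExpander G A B n (ε / 8) (1 / 4) := by
  intro ε hε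
  refine ⟨1, ?_⟩
  intro n hn V _ G A B _ hdis hA hB hadj hdeg X hX hl hu
  rcases hX with hX | hX
  · exact robust_aux G A B n ε hε.1 hε.2 hn hdis hA hB hadj hdeg X hX hl hu
  · exact robust_aux G B A n ε hε.1 hε.2 hn hdis.symm hB hA
      (fun u v h => (hadj u v h).symm) hdeg X hX hl hu
end

section
/- Let n ∈ ℕ with n ≥ 2 and let K_{n,n} be the complete bipartite graph on 2n vertices. Then for every (n−1)/16-bounded edge colouring χ of K_{n,n} there exists a perfect matching of K_{n,n} that is rainbow with respect to χ. -/
namespace ErdosSpencer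

open Finset Equiv

open scoped Classical

abbrev Cell (n : ℕ) := Fin n × Fin n

def Holds {n : ℕ} (π : Perm (Fin n)) (T : Cell n × Cell n) : Prop :=
  π T.1.1 = T.1.2 ∧ π T.2.1 = T.2.2

/-- Permutations avoiding all events of `S`. -/
noncomputable def Av {n : ℕ} (S : Finset (Cell n × Cell n)) : Finset (Perm (Fin n)) :=
  univ.filter (fun π => ∀ T ∈ S, ¬ Holds π T)

/-- Permutations avoiding all events of `S` for which `T` holds. -/
noncomputable def AvT {n : ℕ} (S : Finset (Cell n × Cell n)) (T : Cell n × Cell n) :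
    Finset (Perm (Fin n)) :=
  (Av S).filter (fun π => Holds π T)

/-- The cell meets a row or a column of `T`. -/
def Cross {n : ℕ} (T : Cell n × Cell n) (p : Cell n) : Prop :=
  p.1 = T.1.1 ∨ p.1 = T.2.1 ∨ p.2 = T.1.2 ∨ p.2 = T.2.2

def tau {α : Type*} [DecidableEq α] (b d b' d' : α) : Perm α :=
  swap (swap b b' d) d' * swap b b'

lemma tau_left {α : Type*} [DecidableEq α] {b d b' d' : α} (h : b ≠ d) (h' : b' ≠ d') :
    tau b d b' d' b = b' := by
  simp only [tau, Perm.mul_apply, swap_apply_left]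
  apply swap_apply_of_ne_of_ne _ h'
  intro hh
  apply h
  apply (swap b b').injective
  rw [← hh, swap_apply_left]

lemma tau_right {α : Type*} [DecidableEq α] {b d b' d' : α} :
    tau b d b' d' d = d' := by
  simp only [tau, Perm.mul_apply, swap_apply_left]

lemma tau_other {α : Type*} [DecidableEq α] {b d b' d' z : α} (h : b ≠ d) (hb : z ≠ b) (hd : z ≠ d) :
    tau b d b' d' z = b ∨ tau b d b' d' z = d ∨ tau b d b' d' z = z := by
  simp only [tau, Perm.mul_apply, swap_apply_def]
  grind

lemma lopsided {n : ℕ} (S : Finset (Cell n × Cell n)) (T : Cell n × Cell n)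
    (hT1 : T.1.1 ≠ T.2.1) (hT2 : T.1.2 ≠ T.2.2)
    (hS : ∀ U ∈ S, ¬ Cross T U.1 ∧ ¬ Cross T U.2) :
    (n * n - n) * #(AvT S T) ≤ #(Av S) := by
  have hc : #((univ : Finset (Fin n)).offDiag) = n * n - n := by
    simp [offDiag_card]
  rw [← hc, ← card_product]
  obtain ⟨⟨a, b⟩, ⟨c, d⟩⟩ := T
  simp only at hT1 hT2
  apply card_le_card_of_injOn (fun x => tau b d x.1.1 x.1.2 * x.2)
  · rintro ⟨⟨b', d'⟩, π⟩ hx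
    simp only [coe_product, Set.mem_prod, mem_coe, mem_offDiag, mem_univ, true_and, AvT, Av,
      mem_filter] at hx ⊢
    obtain ⟨hne, hav, h1, h2⟩ := hx
    simp only at h1 h2
    have key : ∀ r s, ¬ Cross ((a, b), (c, d)) (r, s) → tau b d b' d' (π r) = s → π r = s := by
      intro r s hcr hrs
      simp only [Cross, not_or] at hcr
      obtain ⟨hra, hrc, hsb, hsd⟩ := hcr
      have hb : π r ≠ b := fun h => hra (π.injective (h.trans h1.symm))
      have hd : π r ≠ d := fun h => hrc (π.injective (h.trans h2.symm))
      rcases tau_other (b' := b') (d' := d') hT2 hb hd with h | h | h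
      · exact absurd (hrs.symm.trans h) hsb
      · exact absurd (hrs.symm.trans h) hsd
      · exact h.symm.trans hrs
    intro U hU hh
    simp only [Holds, Perm.mul_apply] at hh
    exact hav U hU ⟨key _ _ (hS U hU).1 hh.1, key _ _ (hS U hU).2 hh.2⟩
  · rintro ⟨⟨b', d'⟩, π⟩ hx ⟨⟨b'', d''⟩, ρ⟩ hy hxy
    simp only [coe_product, Set.mem_prod, mem_coe, mem_offDiag, mem_univ, true_and, AvT, Av,
      mem_filter] at hx hy hxy
    obtain ⟨hne, -, h1, h2⟩ := hx
    obtain ⟨hne', -, h1', h2'⟩ := hy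
    simp only at h1 h2 h1' h2'
    have e1 := congrArg (fun f : Perm (Fin n) => f a) hxy
    have e2 := congrArg (fun f : Perm (Fin n) => f c) hxy
    simp only [Perm.mul_apply, h1, h2, h1', h2', tau_left hT2 hne, tau_left hT2 hne',
      tau_right] at e1 e2
    subst e1 e2
    have := mul_left_cancel hxy
    rw [this]

def Bad {n : ℕ} (f : Cell n → ℕ) (T : Cell n × Cell n) : Prop :=
  T.1.1 < T.2.1 ∧ T.1.2 ≠ T.2.2 ∧ f T.1 = f T.2

lemma card_cross {n : ℕ} (T : Cell n × Cell n) :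
    #(univ.filter (fun p : Cell n => Cross T p)) ≤ 4 * n := by
  have hsub : (univ.filter (fun p : Cell n => Cross T p)) ⊆
      (univ.image (fun j : Fin n => (T.1.1, j)) ∪ univ.image (fun j : Fin n => (T.2.1, j))) ∪
      (univ.image (fun j : Fin n => (j, T.1.2)) ∪ univ.image (fun j : Fin n => (j, T.2.2))) := by
    rintro ⟨i, j⟩ h
    simp only [mem_filter, mem_univ, true_and] at h
    unfold Cross at h
    simp only [mem_union, mem_image, mem_univ, true_and, Prod.mk.injEq]
    rcases h with h | h | h | h
    · exact Or.inl (Or.inl ⟨j, h.symm, rfl⟩)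
    · exact Or.inl (Or.inr ⟨j, h.symm, rfl⟩)
    · exact Or.inr (Or.inl ⟨i, rfl, h.symm⟩)
    · exact Or.inr (Or.inr ⟨i, rfl, h.symm⟩)
  have hi : ∀ g : Fin n → Cell n, #(univ.image g) ≤ n := fun g =>
    card_image_le.trans (by simp)
  refine (card_le_card hsub).trans ((card_union_le _ _).trans ?_)
  have h1 := card_union_le (univ.image (fun j : Fin n => (T.1.1, j)))
    (univ.image (fun j : Fin n => (T.2.1, j)))
  have h2 := card_union_le (univ.image (fun j : Fin n => (j, T.1.2)))
    (univ.image (fun j : Fin n => (j, T.2.2)))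
  have := hi (fun j : Fin n => (T.1.1, j))
  have := hi (fun j : Fin n => (T.2.1, j))
  have := hi (fun j : Fin n => (j, T.1.2))
  have := hi (fun j : Fin n => (j, T.2.2))
  omega

lemma card_nbr {n : ℕ} (f : Cell n → ℕ) (hf : ∀ c, 16 * #(univ.filter (fun p => f p = c)) ≤ n - 1)
    (T : Cell n × Cell n) (S : Finset (Cell n × Cell n))
    (hS : ∀ U ∈ S, Bad f U ∧ (Cross T U.1 ∨ Cross T U.2)) :
    4 * #S ≤ n * (n - 1) := by
  let V : Finset (Cell n × Cell n) := (univ.filter (fun p : Cell n => Cross T p)).biUnion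
    (fun p => (univ.filter (fun q => f q = f p)).image (fun q => (p, q)))
  have hsub : S ⊆ V.image (fun x => if x.1.1 < x.2.1 then x else (x.2, x.1)) := by
    rintro ⟨p, q⟩ hU
    obtain ⟨⟨hlt, -, hfe⟩, hc⟩ := hS _ hU
    simp only at hlt hfe hc
    rw [mem_image]
    rcases hc with hc | hc
    · refine ⟨(p, q), ?_, by simp [hlt]⟩
      simp [V, hc, hfe]
    · refine ⟨(q, p), ?_, by simp [hlt.not_gt]⟩
      simp [V, hc, hfe]
  have hV : 16 * #V ≤ (4 * n) * (n - 1) := by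
    calc 16 * #V ≤ 16 * ∑ p ∈ univ.filter (fun p : Cell n => Cross T p),
          #(univ.filter (fun q => f q = f p)) := by
            gcongr
            exact card_biUnion_le.trans (sum_le_sum fun p _ => card_image_le)
      _ = ∑ p ∈ univ.filter (fun p : Cell n => Cross T p),
          16 * #(univ.filter (fun q => f q = f p)) := by rw [mul_sum]
      _ ≤ ∑ p ∈ univ.filter (fun p : Cell n => Cross T p), (n - 1) :=
          sum_le_sum fun p _ => hf _
      _ ≤ (4 * n) * (n - 1) := by
          rw [sum_const, smul_eq_mul]
          exact Nat.mul_le_mul_right _ (card_cross T)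
  have h1 := (card_le_card hsub).trans card_image_le
  rw [mul_assoc] at hV
  omega

lemma Av_union {n : ℕ} (S1 S2 : Finset (Cell n × Cell n)) :
    #(Av S2) ≤ #(Av (S1 ∪ S2)) + ∑ T ∈ S1, #(AvT S2 T) := by
  have hsub : Av S2 ⊆ Av (S1 ∪ S2) ∪ S1.biUnion (fun T => AvT S2 T) := by
    intro π hπ
    by_cases h : ∃ T ∈ S1, Holds π T
    · obtain ⟨T, hT, hh⟩ := h
      exact mem_union_right _ (mem_biUnion.2 ⟨T, hT, mem_filter.2 ⟨hπ, hh⟩⟩)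
    · push Not at h
      simp only [Av, mem_filter, mem_univ, true_and] at hπ
      apply mem_union_left
      simp only [Av, mem_filter, mem_univ, true_and, mem_union]
      rintro T (hT | hT)
      · exact h T hT
      · exact hπ T hT
  refine (card_le_card hsub).trans ((card_union_le _ _).trans ?_)
  gcongr
  exact card_biUnion_le

lemma main_ineq {n : ℕ} (f : Cell n → ℕ)
    (hf : ∀ c, 16 * #(univ.filter (fun p => f p = c)) ≤ n - 1) (hn : 2 ≤ n) (k : ℕ) :
    ∀ S : Finset (Cell n × Cell n), #S = k → (∀ U ∈ S, Bad f U) →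
    ∀ T, Bad f T → (n * n - n) * #(AvT S T) ≤ 2 * #(Av S) := by
  induction k using Nat.strong_induction_on with
  | _ k ih =>
  intro S hk hS T hT
  let S1 := S.filter (fun U => Cross T U.1 ∨ Cross T U.2)
  let S2 := S.filter (fun U => ¬ (Cross T U.1 ∨ Cross T U.2))
  have hunion : S1 ∪ S2 = S := filter_union_filter_not_eq _ _
  have hlop : (n * n - n) * #(AvT S2 T) ≤ #(Av S2) := by
    apply lopsided S2 T hT.1.ne hT.2.1
    intro U hU
    have := (mem_filter.1 hU).2
    push Not at this
    exact this
  have hmono : #(AvT S T) ≤ #(AvT S2 T) := by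
    apply card_le_card
    intro π
    simp only [AvT, Av, mem_filter, mem_univ, true_and]
    rintro ⟨h1, h2⟩
    exact ⟨fun U hU => h1 U (mem_filter.1 hU).1, h2⟩
  have hm : n * n - n = n * (n - 1) := by rw [Nat.mul_sub, mul_one]
  have hmpos : 0 < n * n - n := by
    rw [hm]; exact Nat.mul_pos (by omega) (by omega)
  have hhalf : #(Av S2) ≤ 2 * #(Av S) := by
    rcases S1.eq_empty_or_nonempty with h0 | hne
    · have : S2 = S := by rw [← hunion, h0, empty_union]
      rw [this]; omega
    · have hlt : #S2 < k := by
        rw [← hk]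
        apply card_lt_card
        refine (Finset.ssubset_iff_of_subset (filter_subset _ _)).2 ?_
        obtain ⟨U, hU⟩ := hne
        refine ⟨U, (mem_filter.1 hU).1, fun h => (mem_filter.1 h).2 (mem_filter.1 hU).2⟩
      have hIH : ∀ U ∈ S1, (n * n - n) * #(AvT S2 U) ≤ 2 * #(Av S2) := fun U hU =>
        ih _ hlt S2 rfl (fun V hV => hS V (mem_filter.1 hV).1) U (hS U (mem_filter.1 hU).1)
      have hsum : (n * n - n) * ∑ U ∈ S1, #(AvT S2 U) ≤ #S1 * (2 * #(Av S2)) := by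
        rw [mul_sum]
        exact (sum_le_sum hIH).trans (by rw [sum_const, smul_eq_mul])
      have hnb : 4 * #S1 ≤ n * n - n := by
        rw [hm]
        exact card_nbr f hf T S1 (fun U hU => ⟨hS U (mem_filter.1 hU).1, (mem_filter.1 hU).2⟩)
      have hu := Av_union S1 S2
      rw [hunion] at hu
      set m := n * n - n
      set s := ∑ U ∈ S1, #(AvT S2 U)
      have h2s : 2 * s ≤ #(Av S2) := by
        apply Nat.le_of_mul_le_mul_left _ hmpos
        nlinarith [Nat.mul_le_mul_right (#(Av S2)) hnb]
      omega
  calc _ ≤ (n * n - n) * #(AvT S2 T) := Nat.mul_le_mul_left _ hmono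
    _ ≤ _ := hlop.trans hhalf

lemma Av_pos {n : ℕ} (f : Cell n → ℕ)
    (hf : ∀ c, 16 * #(univ.filter (fun p => f p = c)) ≤ n - 1) (hn : 3 ≤ n)
    (S : Finset (Cell n × Cell n)) : (∀ U ∈ S, Bad f U) → 0 < #(Av S) := by
  induction S using Finset.induction_on with
  | empty =>
    intro _
    exact card_pos.2 ⟨1, by simp [Av]⟩
  | insert T S hT ih =>
    intro h
    have hS : ∀ U ∈ S, Bad f U := fun U hU => h U (mem_insert_of_mem hU)
    have h1 := main_ineq f hf (by omega) _ S rfl hS T (h T (mem_insert_self _ _))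
    have h0 := ih hS
    have hu := Av_union {T} S
    rw [sum_singleton, ← insert_eq] at hu
    by_contra hcon
    have h3 : 3 ≤ n * n - n := by
      have : 3 * n ≤ n * n := Nat.mul_le_mul_right _ hn
      omega
    have := Nat.mul_le_mul_right (#(AvT S T)) h3
    omega

theorem exists_perm {n : ℕ} (f : Cell n → ℕ)
    (hf : ∀ c, 16 * #(univ.filter (fun p => f p = c)) ≤ n - 1) (hn : 3 ≤ n) :
    ∃ π : Perm (Fin n), ∀ i j, f (i, π i) = f (j, π j) → i = j := by
  have := Av_pos f hf hn (univ.filter (Bad f)) (fun U hU => (mem_filter.1 hU).2)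
  obtain ⟨π, hπ⟩ := card_pos.1 this
  simp only [Av, mem_filter, mem_univ, true_and] at hπ
  have key : ∀ i j, i < j → f (i, π i) ≠ f (j, π j) := fun i j hij hfe =>
    hπ ((i, π i), (j, π j)) ⟨hij, fun h => hij.ne (π.injective h), hfe⟩ ⟨rfl, rfl⟩
  refine ⟨π, fun i j h => ?_⟩
  rcases lt_trichotomy i j with hij | hij | hij
  · exact absurd h (key i j hij)
  · exact hij
  · exact absurd h.symm (key j i hij)

end ErdosSpencer

/-- Erdős–Spencer: every (n−1)/16-bounded edge colouring of the complete
bipartite graph K_{n,n} contains a rainbow perfect matching. -/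
theorem erdos_spencer_rainbow_PM (n : ℕ) (hn : 2 ≤ n)
    (χ : Sym2 (Fin n ⊕ Fin n) → ℕ)
    (hbdd : ∀ c : ℕ,
      ((({e : Sym2 (Fin n ⊕ Fin n) |
          e ∈ (completeBipartiteGraph (Fin n) (Fin n)).edgeSet ∧ χ e = c}).ncard : ℝ)
        ≤ ((n : ℝ) - 1) / 16)) :
    ∃ M : (completeBipartiteGraph (Fin n) (Fin n)).Subgraph,
      M.IsPerfectMatching ∧ ∀ e ∈ M.edgeSet, ∀ f ∈ M.edgeSet, χ e = χ f → e = f := by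
  classical
  let f : ErdosSpencer.Cell n → ℕ := fun p => χ s(Sum.inl p.1, Sum.inr p.2)
  have hf : ∀ c, 16 * (Finset.univ.filter (fun p => f p = c)).card ≤ n - 1 := by
    intro c
    have h1 : (Finset.univ.filter (fun p => f p = c)).card ≤
        ({e : Sym2 (Fin n ⊕ Fin n) |
          e ∈ (completeBipartiteGraph (Fin n) (Fin n)).edgeSet ∧ χ e = c}).ncard := by
      rw [← Set.ncard_coe_finset]
      apply Set.ncard_le_ncard_of_injOn
        (fun p : ErdosSpencer.Cell n => s(Sum.inl p.1, Sum.inr p.2)) _ _ (Set.toFinite _)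
      · intro p hp
        simp only [Finset.coe_filter, Finset.mem_univ, true_and, Set.mem_ofPred_eq] at hp
        exact ⟨by simp, hp⟩
      · rintro ⟨a, b⟩ _ ⟨c, d⟩ _ h
        simpa using h
    have h2 := hbdd c
    have h3 : (16 : ℝ) * ((Finset.univ.filter (fun p => f p = c)).card : ℝ) + 1 ≤ n := by
      have : ((Finset.univ.filter (fun p => f p = c)).card : ℝ) ≤ _ := Nat.cast_le.2 h1
      linarith
    have h4 : 16 * (Finset.univ.filter (fun p => f p = c)).card + 1 ≤ n := by exact_mod_cast h3
    omega
  have hn3 : 3 ≤ n := by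
    let x : ErdosSpencer.Cell n := (⟨0, by omega⟩, ⟨0, by omega⟩)
    have h := hf (f x)
    have : 0 < (Finset.univ.filter (fun p => f p = f x)).card :=
      Finset.card_pos.2 ⟨x, by simp⟩
    omega
  obtain ⟨π, hπ⟩ := ErdosSpencer.exists_perm f (by convert hf) hn3
  let M : (completeBipartiteGraph (Fin n) (Fin n)).Subgraph :=
    { verts := Set.univ
      Adj := fun u v => ∃ i, (u = Sum.inl i ∧ v = Sum.inr (π i)) ∨
        (v = Sum.inl i ∧ u = Sum.inr (π i))
      adj_sub := by
        rintro u v ⟨i, ⟨rfl, rfl⟩ | ⟨rfl, rfl⟩⟩ <;> simp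
      edge_vert := fun _ => Set.mem_univ _
      symm := ⟨fun u v ⟨i, h⟩ => ⟨i, h.symm⟩⟩ }
  have hM : ∀ e ∈ M.edgeSet, ∃ i, e = s(Sum.inl i, Sum.inr (π i)) := by
    intro e
    induction e using Sym2.ind with
    | _ u v =>
    intro h
    rw [SimpleGraph.Subgraph.mem_edgeSet] at h
    obtain ⟨i, ⟨rfl, rfl⟩ | ⟨rfl, rfl⟩⟩ := h
    · exact ⟨i, rfl⟩
    · exact ⟨i, Sym2.eq_swap⟩
  refine ⟨M, ?_, ?_⟩
  · rw [SimpleGraph.Subgraph.isPerfectMatching_iff]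
    rintro (i | j)
    · refine ⟨Sum.inr (π i), ⟨i, Or.inl ⟨rfl, rfl⟩⟩, ?_⟩
      rintro v ⟨k, ⟨h1, h2⟩ | ⟨h1, h2⟩⟩
      · rw [h2, Sum.inl.inj h1]
      · cases h2
    · refine ⟨Sum.inl (π.symm j), ⟨π.symm j, Or.inr ⟨rfl, by simp⟩⟩, ?_⟩
      rintro v ⟨k, ⟨h1, h2⟩ | ⟨h1, h2⟩⟩
      · cases h1
      · rw [h1, Sum.inr.inj h2]; simp
  · intro e he g hg h
    obtain ⟨i, rfl⟩ := hM e he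
    obtain ⟨j, rfl⟩ := hM g hg
    rw [hπ i j h]
end

section
/- Let m ≥ 2 and let F = (R ∪ S, E) be a balanced bipartite graph on 2m vertices with parts R = {r₁, …, r_m} and S = {s₁, …, s_m} labelled so that d(r₁) ≤ … ≤ d(r_m) and d(s₁) ≤ … ≤ d(s_m). Suppose that for every integer k with 1 ≤ k ≤ m/2, one has d(r_k) > k and d(s_k) > k. Then F has a Hamiltonian cycle. -/
/-- A Hamiltonian cycle of the bipartite relation, as a pair of m-periodic sequences. -/
def MMHam (m : ℕ) (A : Fin m → Fin m → Prop) : Prop :=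
  ∃ r s : ℤ → Fin m, (∀ i j, r i = r j ↔ (m : ℤ) ∣ i - j) ∧ (∀ i j, s i = s j ↔ (m : ℤ) ∣ i - j) ∧
    (∀ i, A (r i) (s i)) ∧ (∀ i, A (r (i + 1)) (s i))

/-- A Hamiltonian path of the bipartite relation. -/
def MMPath (m : ℕ) (A : Fin m → Fin m → Prop) (r s : ℕ → Fin m) : Prop :=
  (∀ i j, i < m → j < m → r i = r j → i = j) ∧ (∀ i j, i < m → j < m → s i = s j → i = j) ∧
    (∀ i, i < m → A (r i) (s i)) ∧ (∀ i, i + 1 < m → A (r (i + 1)) (s i))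

lemma mm_aux_inj (m : ℕ) (hm : 2 ≤ m) (r : ℕ → Fin m)
    (h : ∀ i j, i < m → j < m → r i = r j → i = j) (i j : ℤ) :
    r (i % m).toNat = r (j % m).toNat ↔ (m : ℤ) ∣ i - j := by
  have hm0 : (0 : ℤ) < m := by omega
  have h1 := Int.emod_nonneg i hm0.ne'
  have h2 := Int.emod_nonneg j hm0.ne'
  have h3 := Int.emod_lt_of_pos i hm0
  have h4 := Int.emod_lt_of_pos j hm0
  rw [← Int.emod_eq_emod_iff_emod_sub_eq_zero.trans (Int.dvd_iff_emod_eq_zero).symm]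
  constructor
  · intro e
    have := h _ _ (by omega) (by omega) e
    omega
  · intro e
    rw [e]

lemma mm_close (m : ℕ) (hm : 2 ≤ m) (A : Fin m → Fin m → Prop) (r s : ℕ → Fin m)
    (h : MMPath m A r s) (hc : A (r 0) (s (m - 1))) : MMHam m A := by
  obtain ⟨h1, h2, h3, h4⟩ := h
  have hm0 : (0 : ℤ) < m := by omega
  refine ⟨fun i => r (i % m).toNat, fun i => s (i % m).toNat, mm_aux_inj m hm r h1,
    mm_aux_inj m hm s h2, ?_, ?_⟩
  · intro i
    have := Int.emod_nonneg i hm0.ne'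
    have := Int.emod_lt_of_pos i hm0
    exact h3 _ (by omega)
  · intro i
    have a1 := Int.emod_nonneg i hm0.ne'
    have a2 := Int.emod_lt_of_pos i hm0
    show A (r ((i + 1) % m).toNat) (s (i % m).toNat)
    by_cases hlt : i % m + 1 < m
    · have e : (i + 1) % m = i % m + 1 := by
        rw [Int.add_emod, Int.emod_eq_of_lt (a := 1) (by omega) (by omega)]
        exact Int.emod_eq_of_lt (by omega) hlt
      have e2 : ((i + 1) % m).toNat = (i % m).toNat + 1 := by omega
      rw [e2]
      exact h4 _ (by omega)
    · have e : (i + 1) % m = 0 := by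
        rw [Int.add_emod, Int.emod_eq_of_lt (a := 1) (by omega) (by omega)]
        have : i % m + 1 = m := by omega
        rw [this, Int.emod_self]
      have e2 : (i % m).toNat = m - 1 := by omega
      rw [e, e2]
      exact hc

lemma mm_path_of_edge (m : ℕ) (hm : 2 ≤ m) (A : Fin m → Fin m → Prop) (a b : Fin m)
    (r s : ℤ → Fin m) (hr : ∀ i j, r i = r j ↔ (m : ℤ) ∣ i - j)
    (hs : ∀ i j, s i = s j ↔ (m : ℤ) ∣ i - j)
    (h1 : ∀ i, A (r i) (s i) ∨ (r i = a ∧ s i = b))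
    (h2 : ∀ i, A (r (i + 1)) (s i) ∨ (r (i + 1) = a ∧ s i = b))
    (i0 : ℤ) (ha : r (i0 + 1) = a) (hb : s i0 = b) :
    ∃ r' s' : ℕ → Fin m, MMPath m A r' s' ∧ r' 0 = a ∧ s' (m - 1) = b := by
  have key : ∀ x : ℤ, (m : ℤ) ∣ x → x < m → -m < x → x = 0 := by
    intro x hx h1 h2
    exact Int.eq_zero_of_abs_lt_dvd hx (abs_lt.2 ⟨h2, h1⟩)
  refine ⟨fun j => r (i0 + 1 + j), fun j => s (i0 + 1 + j), ⟨?_, ?_, ?_, ?_⟩, ?_, ?_⟩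
  · intro i j hi hj e
    have := key _ ((hr _ _).1 e) (by omega) (by omega)
    omega
  · intro i j hi hj e
    have := key _ ((hs _ _).1 e) (by omega) (by omega)
    omega
  · intro i hi
    rcases h1 (i0 + 1 + i) with h | ⟨e1, e2⟩
    · exact h
    · exfalso
      rw [← ha] at e1
      rw [← hb] at e2
      have := key _ ((hr _ _).1 e1) (by omega) (by omega)
      have := key _ ((hs _ _).1 e2) (by omega) (by omega)
      omega
  · intro i hi
    have e0 : i0 + 1 + ((i + 1 : ℕ) : ℤ) = (i0 + 1 + i) + 1 := by push_cast; ring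
    show A (r (i0 + 1 + ((i + 1 : ℕ) : ℤ))) (s (i0 + 1 + i))
    rw [e0]
    rcases h2 (i0 + 1 + i) with h | ⟨e1, e2⟩
    · exact h
    · exfalso
      rw [← ha] at e1
      have := key _ ((hr _ _).1 e1) (by omega) (by omega)
      omega
  · simpa using ha
  · show s (i0 + 1 + ((m - 1 : ℕ) : ℤ)) = b
    rw [← hb, hs]
    exact ⟨1, by omega⟩

lemma mm_open (m : ℕ) (hm : 2 ≤ m) (A : Fin m → Fin m → Prop) (a b : Fin m)
    (h : MMHam m (fun x y => A x y ∨ (x = a ∧ y = b))) :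
    MMHam m A ∨ ∃ r s : ℕ → Fin m, MMPath m A r s ∧ r 0 = a ∧ s (m - 1) = b := by
  obtain ⟨r, s, hr, hs, h1, h2⟩ := h
  by_cases c1 : ∃ i, r (i + 1) = a ∧ s i = b
  · obtain ⟨i0, ha, hb⟩ := c1
    exact Or.inr (mm_path_of_edge m hm A a b r s hr hs h1 h2 i0 ha hb)
  by_cases c2 : ∃ i, r i = a ∧ s i = b
  · obtain ⟨i0, ha, hb⟩ := c2
    right
    refine mm_path_of_edge m hm A a b (fun i => r (-i)) (fun i => s (-i - 1)) ?_ ?_ ?_ ?_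
      (-i0 - 1) ?_ ?_
    · intro i j
      show r _ = r _ ↔ _
      rw [hr, ← dvd_neg]; ring_nf
    · intro i j
      show s _ = s _ ↔ _
      rw [hs, ← dvd_neg]; ring_nf
    · intro i
      have := h2 (-i - 1)
      rwa [show -i - 1 + 1 = -i by ring] at this
    · intro i
      have := h1 (-i - 1)
      show A (r (-(i + 1))) (s (-i - 1)) ∨ _
      rwa [show -(i + 1) = -i - 1 by ring]
    · show r _ = a
      rw [← ha]; congr 1; ring
    · show s _ = b
      rw [← hb]; congr 1; ring
  · left
    push Not at c1 c2
    refine ⟨r, s, hr, hs, fun i => ?_, fun i => ?_⟩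
    · rcases h1 i with h | ⟨e1, e2⟩
      · exact h
      · exact absurd e2 (c2 i e1)
    · rcases h2 i with h | ⟨e1, e2⟩
      · exact h
      · exact absurd e2 (c1 i e1)

lemma mm_rotate (m : ℕ) (hm : 2 ≤ m) (A : Fin m → Fin m → Prop) (r s : ℕ → Fin m)
    (h : MMPath m A r s) (i : ℕ) (hi : i < m) (ha : A (r 0) (s i)) (hb : A (r i) (s (m - 1))) :
    MMHam m A := by
  obtain ⟨h1, h2, h3, h4⟩ := h
  refine mm_close m hm A (fun j => r (if j ≤ i then j else m + i - j))
    (fun j => s (if j < i then j else m - 1 + i - j)) ⟨?_, ?_, ?_, ?_⟩ ?_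
  · intro j k hj hk e
    have := h1 _ _ (by split_ifs <;> omega) (by split_ifs <;> omega) e
    split_ifs at this <;> omega
  · intro j k hj hk e
    have := h2 _ _ (by split_ifs <;> omega) (by split_ifs <;> omega) e
    split_ifs at this <;> omega
  · intro j hj
    show A (r (if j ≤ i then j else m + i - j)) (s (if j < i then j else m - 1 + i - j))
    rcases lt_trichotomy j i with c | c | c
    · rw [if_pos c.le, if_pos c]
      exact h3 j hj
    · subst c
      rw [if_pos le_rfl, if_neg (lt_irrefl _)]
      simpa using hb
    · rw [if_neg (by omega), if_neg (by omega)]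
      have := h4 (m - 1 + i - j) (by omega)
      rwa [show m - 1 + i - j + 1 = m + i - j by omega] at this
  · intro j hj
    show A (r (if j + 1 ≤ i then j + 1 else m + i - (j + 1)))
      (s (if j < i then j else m - 1 + i - j))
    by_cases c : j < i
    · rw [if_pos (by omega), if_pos c]
      exact h4 j hj
    · rw [if_neg (by omega), if_neg c]
      have := h3 (m - 1 + i - j) (by omega)
      rwa [show m + i - (j + 1) = m - 1 + i - j by omega]
  · show A (r (if 0 ≤ i then 0 else m + i - 0))
      (s (if m - 1 < i then m - 1 else m - 1 + i - (m - 1)))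
    rw [if_pos (by omega), if_neg (by omega), show m - 1 + i - (m - 1) = i by omega]
    exact ha

lemma mm_surj (m : ℕ) (s : ℕ → Fin m) (h : ∀ i j, i < m → j < m → s i = s j → i = j) (x : Fin m) :
    ∃ i, i < m ∧ s i = x := by
  have hinj : Function.Injective (fun i : Fin m => s i) := by
    intro i j e
    exact Fin.ext (h _ _ i.2 j.2 e)
  obtain ⟨i, hi⟩ := (Finite.injective_iff_surjective.1 hinj) x
  exact ⟨i, i.2, hi⟩

open Classical in
/-- Degree of x. -/
noncomputable def mmdeg {m : ℕ} (A : Fin m → Fin m → Prop) (x : Fin m) : ℕ :=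
  (Finset.univ.filter (fun y => A x y)).card

open Classical in
lemma mm_deg_sum (m : ℕ) (A : Fin m → Fin m → Prop) (r s : ℕ → Fin m)
    (h : MMPath m A r s) (hno : ∀ i, i < m → A (r 0) (s i) → ¬ A (r i) (s (m - 1))) :
    mmdeg A (r 0) + mmdeg (fun x y => A y x) (s (m - 1)) ≤ m := by
  obtain ⟨h1, h2, -, -⟩ := h
  have e1 : mmdeg A (r 0) ≤ ((Finset.range m).filter (fun i => A (r 0) (s i))).card := by
    refine (Finset.card_le_card ?_).trans (Finset.card_image_le (f := s))
    intro y hy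
    obtain ⟨i, hi, rfl⟩ := mm_surj m s h2 y
    simp only [Finset.mem_filter, Finset.mem_univ, true_and] at hy
    exact Finset.mem_image_of_mem _ (by simp [hi, hy])
  have e2 : mmdeg (fun x y => A y x) (s (m - 1)) ≤
      ((Finset.range m).filter (fun i => A (r i) (s (m - 1)))).card := by
    refine (Finset.card_le_card ?_).trans (Finset.card_image_le (f := r))
    intro y hy
    obtain ⟨i, hi, rfl⟩ := mm_surj m r h1 y
    simp only [Finset.mem_filter, Finset.mem_univ, true_and] at hy
    exact Finset.mem_image_of_mem _ (by simp [hi, hy])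
  have hd : Disjoint ((Finset.range m).filter (fun i => A (r 0) (s i)))
      ((Finset.range m).filter (fun i => A (r i) (s (m - 1)))) := by
    rw [Finset.disjoint_left]
    intro i hi hi'
    simp only [Finset.mem_filter, Finset.mem_range] at hi hi'
    exact hno i hi.1 hi.2 hi'.2
  have e3 := Finset.card_le_card (Finset.union_subset
    (Finset.filter_subset (fun i => A (r 0) (s i)) (Finset.range m))
    (Finset.filter_subset (fun i => A (r i) (s (m - 1))) (Finset.range m)))
  rw [Finset.card_union_of_disjoint hd, Finset.card_range] at e3
  omega

open Classical in
/-- The degree condition in counting form. -/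
def MMCond (m : ℕ) (A : Fin m → Fin m → Prop) : Prop :=
  ∀ k, 1 ≤ k → 2 * k ≤ m → (Finset.univ.filter (fun x => mmdeg A x ≤ k)).card < k

lemma mmdeg_mono {m : ℕ} {A B : Fin m → Fin m → Prop} (h : ∀ x y, A x y → B x y) (x : Fin m) :
    mmdeg A x ≤ mmdeg B x := by
  classical
  unfold mmdeg
  apply Finset.card_le_card
  intro y hy
  simp only [Finset.mem_filter, Finset.mem_univ, true_and] at hy ⊢
  exact h _ _ hy

lemma MMCond.mono {m : ℕ} {A B : Fin m → Fin m → Prop} (h : ∀ x y, A x y → B x y)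
    (hA : MMCond m A) : MMCond m B := by
  classical
  intro k h1 h2
  refine lt_of_le_of_lt (Finset.card_le_card ?_) (hA k h1 h2)
  intro x hx
  simp only [Finset.mem_filter, Finset.mem_univ, true_and] at hx ⊢
  exact (mmdeg_mono h x).trans hx

lemma mm_contra (m : ℕ) (hm : 2 ≤ m) (A : Fin m → Fin m → Prop) (hA : MMCond m A) (a b : Fin m)
    (hmax : ∀ x, ¬ A x b → mmdeg A x ≤ mmdeg A a)
    (hsum : mmdeg A a + mmdeg (fun x y => A y x) b ≤ m)
    (hle : mmdeg A a ≤ mmdeg (fun x y => A y x) b) : False := by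
  classical
  have hpos : 1 ≤ mmdeg A a := by
    by_contra hc
    have h1 := hA 1 le_rfl (by omega)
    have : a ∈ (Finset.univ.filter (fun x => mmdeg A x ≤ 1)) := by
      simp only [Finset.mem_filter, Finset.mem_univ, true_and]
      omega
    have := Finset.card_pos.2 ⟨a, this⟩
    omega
  have h := hA (mmdeg A a) hpos (by omega)
  have h2 : (Finset.univ.filter (fun x => ¬ A x b)).card ≤
      (Finset.univ.filter (fun x => mmdeg A x ≤ mmdeg A a)).card := by
    apply Finset.card_le_card
    intro x hx
    simp only [Finset.mem_filter, Finset.mem_univ, true_and] at hx ⊢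
    exact hmax x hx
  have h3 := Finset.card_filter_add_card_filter_not (s := (Finset.univ : Finset (Fin m)))
    (fun x => A x b)
  rw [Finset.card_univ, Fintype.card_fin] at h3
  have h4 : mmdeg (fun x y => A y x) b = (Finset.univ.filter (fun x => A x b)).card := rfl
  omega

lemma mm_main (m : ℕ) (hm : 2 ≤ m) : ∀ (n : ℕ) (A : Fin m → Fin m → Prop),
    {p : Fin m × Fin m | ¬ A p.1 p.2}.ncard = n → MMCond m A → MMCond m (fun x y => A y x) →
    MMHam m A := by
  classical
  intro n
  induction n using Nat.strong_induction_on with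
  | _ n ih =>
  intro A hn hA hA'
  by_cases hall : ∀ x y, A x y
  · refine mm_close m hm A (fun i => ⟨i % m, Nat.mod_lt _ (by omega)⟩)
      (fun i => ⟨i % m, Nat.mod_lt _ (by omega)⟩) ⟨?_, ?_, ?_, ?_⟩ (hall _ _)
    · intro i j hi hj e
      simpa [Nat.mod_eq_of_lt hi, Nat.mod_eq_of_lt hj] using e
    · intro i j hi hj e
      simpa [Nat.mod_eq_of_lt hi, Nat.mod_eq_of_lt hj] using e
    · intros; exact hall _ _
    · intros; exact hall _ _
  push Not at hall
  obtain ⟨x0, y0, h0⟩ := hall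
  obtain ⟨⟨a, b⟩, hab, hmax⟩ := Finset.exists_max_image
    (Finset.univ.filter (fun p : Fin m × Fin m => ¬ A p.1 p.2))
    (fun p => mmdeg A p.1 + mmdeg (fun x y => A y x) p.2) ⟨(x0, y0), by simp [h0]⟩
  simp only [Finset.mem_filter, Finset.mem_univ, true_and] at hab hmax
  have hB : MMHam m (fun x y => A x y ∨ (x = a ∧ y = b)) := by
    refine ih _ ?_ _ rfl (hA.mono fun _ _ => Or.inl) (hA'.mono fun _ _ => Or.inl)
    rw [← hn]
    apply Set.ncard_lt_ncard _ (Set.toFinite _)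
    refine (Set.ssubset_iff_of_subset ?_).2 ⟨(a, b), hab, fun h => h (Or.inr ⟨rfl, rfl⟩)⟩
    intro p hp h
    exact hp (Or.inl h)
  rcases mm_open m hm A a b hB with h | ⟨r, s, hp, rfl, rfl⟩
  · exact h
  by_contra hno
  have hsum := mm_deg_sum m A r s hp
    (fun i hi h1 h2 => hno (mm_rotate m hm A r s hp i hi h1 h2))
  rcases le_total (mmdeg A (r 0)) (mmdeg (fun x y => A y x) (s (m - 1))) with hle | hle
  · refine mm_contra m hm A hA (r 0) (s (m - 1)) (fun x hx => ?_) hsum hle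
    have := hmax (x, s (m - 1)) hx
    simp only at this
    omega
  · refine mm_contra m hm (fun x y => A y x) hA' (s (m - 1)) (r 0) (fun x hx => ?_) ?_ hle
    · have := hmax (r 0, x) hx
      simp only at this
      omega
    · rw [add_comm]; exact hsum

lemma mm_cond_of (m : ℕ) (A : Fin m → Fin m → Prop)
    (hmono : ∀ i j : Fin m, i ≤ j → mmdeg A i ≤ mmdeg A j)
    (h : ∀ k : Fin m, 2 * ((k : ℕ) + 1) ≤ m → (k : ℕ) + 1 < mmdeg A k) : MMCond m A := by
  classical
  intro k h1 h2
  have hk := h ⟨k - 1, by omega⟩ (by simp only; omega)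
  simp only at hk
  have : (Finset.univ.filter (fun x => mmdeg A x ≤ k)) ⊆ Finset.Iio (⟨k - 1, by omega⟩ : Fin m) := by
    intro x hx
    simp only [Finset.mem_filter, Finset.mem_univ, true_and] at hx
    rw [Finset.mem_Iio]
    by_contra hc
    have := hmono _ _ (not_lt.1 hc)
    omega
  have := Finset.card_le_card this
  rw [Fin.card_Iio] at this
  simp only at this
  omega

lemma mm_walk (m : ℕ) (hm : 2 ≤ m) (F : SimpleGraph (Fin m ⊕ Fin m))
    (h : MMHam m (fun x y => F.Adj (Sum.inl x) (Sum.inr y))) :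
    ∃ (v : Fin m ⊕ Fin m) (c : F.Walk v v), c.IsHamiltonianCycle := by
  obtain ⟨r, s, hr, hs, h1, h2⟩ := h
  have key : ∀ x : ℤ, (m : ℤ) ∣ x → x < m → -m < x → x = 0 := by
    intro x hx h1 h2
    exact Int.eq_zero_of_abs_lt_dvd hx (abs_lt.2 ⟨h2, h1⟩)
  let f : ℕ → Fin m ⊕ Fin m := fun t =>
    if t % 2 = 0 then Sum.inl (r ((t / 2 : ℕ) : ℤ)) else Sum.inr (s ((t / 2 : ℕ) : ℤ))
  have hstep : ∀ t, F.Adj (f t) (f (t + 1)) := by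
    intro t
    rcases Nat.even_or_odd' t with ⟨c, rfl | rfl⟩
    · simp only [f]
      rw [if_pos (by omega), if_neg (by omega), show 2 * c / 2 = c by omega,
        show (2 * c + 1) / 2 = c by omega]
      exact h1 _
    · simp only [f]
      rw [if_neg (by omega), if_pos (by omega), show (2 * c + 1) / 2 = c by omega,
        show (2 * c + 1 + 1) / 2 = c + 1 by omega]
      have := h2 c
      exact_mod_cast this.symm
  have hper : f (2 * m) = f 0 := by
    have e : r (m : ℤ) = r 0 := (hr _ _).2 ⟨1, by simp⟩
    simp [f, e]
  have hinj : ∀ t u, t < 2 * m → u < 2 * m → f t = f u → t = u := by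
    intro t u ht hu e
    simp only [f] at e
    split_ifs at e with c1 c2 c2
    · have := key _ ((hr _ _).1 (Sum.inl.inj e)) (by omega) (by omega)
      omega
    · have := key _ ((hs _ _).1 (Sum.inr.inj e)) (by omega) (by omega)
      omega
  have hsub : ∀ u v : Fin (2 * m), (u - v).val = 1 → F.Adj (f v) (f u) := by
    intro u v huv
    by_cases hle : v ≤ u
    · rw [Fin.sub_val_of_le hle] at huv
      rw [show (u : ℕ) = v + 1 by omega]
      exact hstep _
    · rw [Fin.sub_def] at huv
      simp only at huv
      have hu := u.2
      have hv := v.2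
      have hlt : (u : ℕ) < v := by simpa using hle
      rw [Nat.mod_eq_of_lt (by omega)] at huv
      have e1 : (u : ℕ) = 0 := by omega
      have e2 := hstep v
      rw [show (v : ℕ) + 1 = 2 * m by omega, hper] at e2
      rw [e1]
      exact e2
  have hcont : (SimpleGraph.cycleGraph (2 * m)).IsContained F := by
    refine ⟨⟨⟨fun t => f t, ?_⟩, ?_⟩⟩
    · intro u v huv
      rcases SimpleGraph.cycleGraph_adj'.1 huv with h | h
      · exact (hsub _ _ h).symm
      · exact hsub _ _ h
    · intro u v e
      exact Fin.ext (hinj _ _ u.2 v.2 e)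
  obtain ⟨v, p, hp, hl⟩ := (SimpleGraph.cycleGraph_isContained_iff (by omega)).1 hcont
  refine ⟨v, p, SimpleGraph.Walk.isHamiltonianCycle_iff_isCycle_and_length_eq.2 ⟨hp, ?_⟩⟩
  rw [hl, Fintype.card_sum, Fintype.card_fin]
  omega

/-- Moon–Moser: let F be a balanced bipartite graph on parts
R = {r₁,…,r_m} and S = {s₁,…,s_m} (here rᵢ = inl (i−1), sᵢ = inr (i−1)), labelled so that
degrees are nondecreasing. If d(r_k) > k and d(s_k) > k for every 1 ≤ k ≤ m/2, then F
has a Hamiltonian cycle. -/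
theorem moon_moser_hamiltonian (m : ℕ) (hm : 2 ≤ m)
    (F : SimpleGraph (Fin m ⊕ Fin m))
    (hbipR : ∀ a b : Fin m, ¬ F.Adj (Sum.inl a) (Sum.inl b))
    (hbipS : ∀ a b : Fin m, ¬ F.Adj (Sum.inr a) (Sum.inr b))
    (hmonoR : ∀ i j : Fin m, i ≤ j →
      (F.neighborSet (Sum.inl i)).ncard ≤ (F.neighborSet (Sum.inl j)).ncard)
    (hmonoS : ∀ i j : Fin m, i ≤ j →
      (F.neighborSet (Sum.inr i)).ncard ≤ (F.neighborSet (Sum.inr j)).ncard)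
    (hR : ∀ k : Fin m, 2 * ((k : ℕ) + 1) ≤ m →
      (k : ℕ) + 1 < (F.neighborSet (Sum.inl k)).ncard)
    (hS : ∀ k : Fin m, 2 * ((k : ℕ) + 1) ≤ m →
      (k : ℕ) + 1 < (F.neighborSet (Sum.inr k)).ncard) :
    ∃ (v : Fin m ⊕ Fin m) (c : F.Walk v v), c.IsHamiltonianCycle := by
  classical
  have eR : ∀ x, (F.neighborSet (Sum.inl x)).ncard =
      mmdeg (fun x y => F.Adj (Sum.inl x) (Sum.inr y)) x := by
    intro x
    unfold mmdeg
    rw [← Finset.card_map Function.Embedding.inr (α := Fin m) (β := Fin m ⊕ Fin m),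
      ← Set.ncard_coe_finset]
    congr 1
    ext (y | y)
    · simpa using hbipR x y
    · simp
  have eS : ∀ x, (F.neighborSet (Sum.inr x)).ncard =
      mmdeg (fun y x => F.Adj (Sum.inl x) (Sum.inr y)) x := by
    intro x
    unfold mmdeg
    rw [← Finset.card_map Function.Embedding.inl (α := Fin m) (β := Fin m ⊕ Fin m),
      ← Set.ncard_coe_finset]
    congr 1
    ext (y | y)
    · simp [F.adj_comm]
    · simpa using hbipS x y
  simp only [eR] at hmonoR hR
  simp only [eS] at hmonoS hS
  exact mm_walk m hm F (mm_main m hm _ _ rfl (mm_cond_of m _ hmonoR hR)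
    (mm_cond_of m _ hmonoS hS))
end
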